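/- Assume π̄(a) > 0 for every a ∈ A, and assume the NIAS inequalities hold for a utility u : X×A → ℝ: for all a, b ∈ A, ∑_{x∈X} p(x|a)·(u(x,a) − u(x,b)) ≥ 0. Then: (i) for every revealed signal s ∈ S', the Bayesian posterior computed from the prior μ and the revealed attention function α' at signal s equals s itself, i.e., μ(x)α'(s|x)/∑_y μ(y)α'(s|y) = s(x) for all x; and (ii) the revealed choice function is Bayes-optimal: for every s ∈ S' and a ∈ A, η'(a|s) > 0 implies ∑_x s(x)·u(x,a) ≥ ∑_x s(x)·u(x,b) for all b ∈ A. -/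

import Mathlib

open Finset
open scoped Classical

/-- The induced action probability `π̄(a) = ∑_x μ(x) π(a|x)`. -/
noncomputable def actProb {X A : Type*} [Fintype X]
    (μ : X → ℝ) (π : X → A → ℝ) (a : A) : ℝ :=
  ∑ x, μ x * π x a

/-- The revealed posterior `p(·|a)`, as a function on `X`:
`p(x|a) = μ(x) π(a|x) / π̄(a)`. -/
noncomputable def revPost {X A : Type*} [Fintype X]
    (μ : X → ℝ) (π : X → A → ℝ) (a : A) : X → ℝ :=
  fun x => μ x * π x a / actProb μ π a

/-- The revealed attention function `α'(s|x) = ∑_{a : p(·|a) = s} π(a|x)`. -/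
noncomputable def revAtt {X A : Type*} [Fintype X] [Fintype A]
    (μ : X → ℝ) (π : X → A → ℝ) (s : X → ℝ) (x : X) : ℝ :=
  ∑ a, if revPost μ π a = s then π x a else 0

/-- The revealed choice function
`η'(a|s) = π̄(a) 1{p(·|a) = s} / ∑_{b : p(·|b) = s} π̄(b)`. -/
noncomputable def revChoice {X A : Type*} [Fintype X] [Fintype A]
    (μ : X → ℝ) (π : X → A → ℝ) (s : X → ℝ) (a : A) : ℝ :=
  (actProb μ π a * if revPost μ π a = s then (1:ℝ) else 0) /
    ∑ b, if revPost μ π b = s then actProb μ π b else 0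

/-!
An action `a` with `p(·|a) = s` has `μ(x) π(a|x) = s(x) π̄(a)`. Summing over all such actions gives
`μ(x) α'(s|x) = s(x) P(s)`, where `P(s)` is the total probability of these actions. As `s` has total
mass one, normalising the left-hand side over `x` recovers `s`. For optimality, `η'(a|s) > 0` forces
`p(·|a) = s`, and the NIAS inequality for `a` is then the optimality of `a` at the belief `s`.
-/

section

variable {X A : Type*} [Fintype X] {μ : X → ℝ} {π : X → A → ℝ} {s : X → ℝ} {a : A}

theorem sum_revPost (ha : actProb μ π a ≠ 0) : ∑ x, revPost μ π a x = 1 := by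
  simp only [revPost]
  rw [← Finset.sum_div]
  exact div_self ha

theorem actProb_ne_zero_of_revPost_ne_zero (ha : revPost μ π a ≠ 0) : actProb μ π a ≠ 0 := by
  contrapose! ha
  ext x
  simp only [revPost, ha, div_zero, Pi.zero_apply]

theorem revPost_mul_actProb (ha : actProb μ π a ≠ 0) (x : X) :
    revPost μ π a x * actProb μ π a = μ x * π x a :=
  div_mul_cancel₀ _ ha

variable [Fintype A]

/-- The probability `P(s) = ∑_{a : p(·|a) = s} π̄(a)` of the signal `s`, which is the denominator
of `η'(a|s)`. It is written as a sum over all actions to agree verbatim with `revChoice`. -/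
noncomputable def signalProb (μ : X → ℝ) (π : X → A → ℝ) (s : X → ℝ) : ℝ :=
  ∑ a, if revPost μ π a = s then actProb μ π a else 0

theorem signalProb_revPost_pos (hπbar : ∀ b, 0 ≤ actProb μ π b) (ha : 0 < actProb μ π a) :
    0 < signalProb μ π (revPost μ π a) := by
  refine Finset.sum_pos' (fun b _ => ite_nonneg (hπbar b) le_rfl) ⟨a, Finset.mem_univ a, ?_⟩
  rwa [if_pos rfl]

theorem exists_revPost_eq_of_signalProb_ne_zero (hs : signalProb μ π s ≠ 0) :
    ∃ a, actProb μ π a ≠ 0 ∧ revPost μ π a = s := by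
  obtain ⟨a, -, ha⟩ := Finset.exists_ne_zero_of_sum_ne_zero hs
  obtain ⟨has, ha⟩ := ite_ne_right_iff.mp ha
  exact ⟨a, ha, has⟩

theorem sum_eq_one_of_signalProb_ne_zero (hs : signalProb μ π s ≠ 0) : ∑ x, s x = 1 := by
  obtain ⟨a, ha, rfl⟩ := exists_revPost_eq_of_signalProb_ne_zero hs
  exact sum_revPost ha

theorem mul_revAtt (hs : s ≠ 0) (x : X) :
    μ x * revAtt μ π s x = s x * signalProb μ π s := by
  rw [revAtt, signalProb, Finset.mul_sum, Finset.mul_sum]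
  refine Finset.sum_congr rfl fun a _ => ?_
  split_ifs with has
  · subst has
    -- `x / 0 = 0` makes the posterior of an action of probability zero vanish.
    exact (revPost_mul_actProb (actProb_ne_zero_of_revPost_ne_zero hs) x).symm
  · simp only [mul_zero]

theorem bayes_revAtt (hs : signalProb μ π s ≠ 0) (x : X) :
    μ x * revAtt μ π s x / ∑ y, μ y * revAtt μ π s y = s x := by
  have hsum : ∑ y, s y = 1 := sum_eq_one_of_signalProb_ne_zero hs
  have hs0 : s ≠ 0 := by
    rintro rfl
    simp at hsum
  simp only [mul_revAtt hs0]
  rw [← Finset.sum_mul, hsum, one_mul, mul_div_cancel_right₀ _ hs]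

theorem revPost_eq_of_revChoice_ne_zero (ha : revChoice μ π s a ≠ 0) : revPost μ π a = s := by
  contrapose! ha
  rw [revChoice, if_neg ha, mul_zero, zero_div]

theorem actProb_ne_zero_of_revChoice_ne_zero (ha : revChoice μ π s a ≠ 0) :
    actProb μ π a ≠ 0 := by
  contrapose! ha
  rw [revChoice, ha, zero_mul, zero_div]

end

theorem revealed_bayes_consistency_of_nias_general
    {X A : Type*} [Fintype X] [Fintype A]
    (μ : X → ℝ) (π : X → A → ℝ) (hπbar : ∀ a, 0 ≤ actProb μ π a)
    (u : X → A → ℝ)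
    (hNIAS : ∀ a, 0 < actProb μ π a → ∀ b, 0 ≤ ∑ x, revPost μ π a x * (u x a - u x b)) :
    (∀ s : X → ℝ, (∃ a, 0 < actProb μ π a ∧ revPost μ π a = s) →
        ∀ x, μ x * revAtt μ π s x / (∑ y, μ y * revAtt μ π s y) = s x)
    ∧
    (∀ s : X → ℝ, ∀ a, 0 < revChoice μ π s a →
        ∀ b, ∑ x, s x * u x b ≤ ∑ x, s x * u x a) := by
  constructor
  · rintro _ ⟨a, ha, rfl⟩
    exact bayes_revAtt (signalProb_revPost_pos hπbar ha).ne'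
  · intro s a hchosen b
    have hpos : 0 < actProb μ π a :=
      (hπbar a).lt_of_ne' (actProb_ne_zero_of_revChoice_ne_zero hchosen.ne')
    obtain rfl : revPost μ π a = s := revPost_eq_of_revChoice_ne_zero hchosen.ne'
    simpa only [mul_sub, Finset.sum_sub_distrib, sub_nonneg] using hNIAS a hpos b

/-- If the NIAS inequalities hold for utility `u`, then (i) every revealed signal `s` is
a fixed point of Bayesian updating of the prior via the revealed attention function, and
(ii) the revealed choice function is Bayes-optimal for `u`. -/
theorem revealed_bayes_consistency_of_nias
    {X A : Type*} [Fintype X] [Fintype A]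
    (μ : X → ℝ) (hμpos : ∀ x, 0 < μ x) (hμsum : ∑ x, μ x = 1)
    (π : X → A → ℝ) (hπnn : ∀ x a, 0 ≤ π x a) (hπsum : ∀ x, ∑ a, π x a = 1)
    (hπbar : ∀ a, 0 < actProb μ π a)
    (u : X → A → ℝ)
    (hNIAS : ∀ a b, 0 ≤ ∑ x, revPost μ π a x * (u x a - u x b)) :
    ((∀ s : X → ℝ, (∃ a, revPost μ π a = s) →
        ∀ x, μ x * revAtt μ π s x / (∑ y, μ y * revAtt μ π s y) = s x)
    ∧
    (∀ s : X → ℝ, (∃ a, revPost μ π a = s) →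
        ∀ a, 0 < revChoice μ π s a →
          ∀ b, ∑ x, s x * u x b ≤ ∑ x, s x * u x a)) := by
  obtain ⟨hbayes, hoptimal⟩ :=
    revealed_bayes_consistency_of_nias_general μ π (fun a => (hπbar a).le) u fun a _ => hNIAS a
  exact ⟨fun s ⟨a, ha⟩ => hbayes s ⟨a, hπbar a, ha⟩, fun s _ => hoptimal s⟩
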